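/- There exists a constant C > 0, independent of ε and u, such that for every ε ∈ (0,1] and every smooth L-periodic function u: 2 ∫₀^L (A^ε u)(x) u(x) dx + 2 ∫₀^L (A^ε u)'(x) u'(x) dx + Σ_{k∈ℤ} λ_k² ∫₀^L [ ((Ψ_k u)'(x))² + ((Ψ_k u)''(x))² ] dx + Σ_{k∈ℤ} γ_k² ∫₀^L [ (Ψ_k(x) f(u(x)))² + ((Ψ_k f(u))'(x))² ] dx ≤ C ‖u‖_{1,2}² − 2ε ‖u‖_{2,2}². -/

import Mathlib

/-!
Put `T u = ∂(p u)` for a coefficient function `p`. Since `T + T*` is multiplication by `p'`,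
`⟨T² u, u⟩ + ‖T u‖² = ∫ p' u T u`, so the second-order terms cancel in `L²`. The commutation
relation `∂ T = T ∂ + T'`, with `T' u = ∂(p' u)`, gives the same cancellation for `⟨∂ T² u, ∂ u⟩`
and `‖∂ T u‖²`. After integration by parts what remains is a quadratic form in `(u, u')` whose
coefficients are combinations of products `p⁽ⁱ⁾ p⁽ʲ⁾` with `i + j ≤ 4`; the normalization of `Ψ_k`
bounds these products uniformly in `k`, and the summability of `λ_k²` and `γ_k²` does the rest. The
viscous part contributes exactly `2ε ‖u‖₂² - 2ε ‖u‖_{2,2}²`.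
-/

open MeasureTheory

noncomputable section

/-- The normalizing constants `c_k = sqrt(2 / (L (1 + (2πk/L)² + (2πk/L)⁴)))`. -/
def cL (L : ℝ) (k : ℤ) : ℝ :=
  Real.sqrt (2 / (L * (1 + (2 * Real.pi * (k : ℝ) / L) ^ 2
    + (2 * Real.pi * (k : ℝ) / L) ^ 4)))

/-- The trigonometric basis functions `Ψ_k` on the torus `𝕋_L`. -/
def psi (L : ℝ) (k : ℤ) : ℝ → ℝ := fun x =>
  if 0 < k then cL L k * Real.cos (2 * Real.pi * (k : ℝ) * x / L)
  else if k = 0 then cL L 0 / Real.sqrt 2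
  else cL L k * Real.sin (2 * Real.pi * (k : ℝ) * x / L)

/-- `‖u‖₂²  = ∫₀^L u²`. -/
def norm2sq (L : ℝ) (u : ℝ → ℝ) : ℝ := ∫ x in (0 : ℝ)..L, (u x) ^ 2

/-- `‖u‖_{1,2}² = ∫₀^L (u² + u'²)`. -/
def norm12sq (L : ℝ) (u : ℝ → ℝ) : ℝ :=
  ∫ x in (0 : ℝ)..L, ((u x) ^ 2 + (deriv u x) ^ 2)

/-- `‖u‖_{2,2}² = ∫₀^L (u² + u'² + u''²)`. -/
def norm22sq (L : ℝ) (u : ℝ → ℝ) : ℝ :=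
  ∫ x in (0 : ℝ)..L, ((u x) ^ 2 + (deriv u x) ^ 2 + (deriv (deriv u) x) ^ 2)

/-- The operator `A^ε u = (1/2) Σ_k λ_k² ∂_x(Ψ_k ∂_x(Ψ_k u)) + ε ∂_x² u`. -/
def Aop (L : ℝ) (lam : ℤ → ℝ) (ε : ℝ) (u : ℝ → ℝ) : ℝ → ℝ := fun x =>
  (1 / 2) * (∑' k : ℤ,
      (lam k) ^ 2 * deriv (fun y => psi L k y * deriv (fun z => psi L k z * u z) y) x)
    + ε * deriv (deriv u) x

/-- Functions of class `C^n` on the torus of length `L`, encoded as `L`-periodic functions on the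
line. -/
structure PeriodicContDiff (L : ℝ) (n : ℕ) (u : ℝ → ℝ) : Prop where
  contDiff : ContDiff ℝ n u
  periodic : Function.Periodic u L

namespace PeriodicContDiff

variable {L : ℝ} {n m : ℕ} {u v : ℝ → ℝ}

lemma of_le (hu : PeriodicContDiff L n u) (h : m ≤ n) : PeriodicContDiff L m u :=
  ⟨hu.contDiff.of_le (by exact_mod_cast h), hu.periodic⟩

lemma continuous (hu : PeriodicContDiff L n u) : Continuous u := hu.contDiff.continuous

lemma differentiable (hu : PeriodicContDiff L (n + 1) u) : Differentiable ℝ u :=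
  hu.contDiff.differentiable (by simp)

lemma hasDerivAt (hu : PeriodicContDiff L (n + 1) u) (x : ℝ) : HasDerivAt u (deriv u x) x :=
  (hu.differentiable x).hasDerivAt

protected lemma deriv (hu : PeriodicContDiff L (n + 1) u) : PeriodicContDiff L n (deriv u) where
  contDiff := (contDiff_succ_iff_deriv.1 (by exact_mod_cast hu.contDiff)).2.2
  periodic x := by rw [← deriv_comp_add_const, funext hu.periodic]

protected lemma mul (hu : PeriodicContDiff L n u) (hv : PeriodicContDiff L n v) :
    PeriodicContDiff L n fun x => u x * v x :=
  ⟨hu.contDiff.mul hv.contDiff, hu.periodic.mul hv.periodic⟩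

protected lemma const_mul (c : ℝ) (hu : PeriodicContDiff L n u) :
    PeriodicContDiff L n fun x => c * u x :=
  ⟨contDiff_const.mul hu.contDiff, fun x => by rw [hu.periodic]⟩

lemma exists_abs_le (hu : PeriodicContDiff L n u) (hL : L ≠ 0) : ∃ B, ∀ x, |u x| ≤ B := by
  obtain ⟨B, hB⟩ := (hu.periodic.isBounded_of_continuous hL hu.continuous).exists_norm_le
  exact ⟨B, fun x => hB _ (Set.mem_range_self x)⟩

lemma exists_abs_iterate_deriv_le (hu : PeriodicContDiff L n u) (hL : L ≠ 0) :
    ∃ B, ∀ i ≤ n, ∀ x, |deriv^[i] u x| ≤ B := by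
  induction n generalizing u with
  | zero =>
    obtain ⟨B, hB⟩ := hu.exists_abs_le hL
    exact ⟨B, fun i hi => by rwa [Nat.le_zero.1 hi]⟩
  | succ n ih =>
    obtain ⟨B₀, hB₀⟩ := hu.exists_abs_le hL
    obtain ⟨B, hB⟩ := ih hu.deriv
    refine ⟨max B₀ B, fun i hi x => ?_⟩
    cases i with
    | zero => exact (hB₀ x).trans (le_max_left _ _)
    | succ i => exact (hB i (Nat.le_of_succ_le_succ hi) x).trans (le_max_right _ _)

lemma integral_add_deriv (hv : PeriodicContDiff L 1 v) (hu : Continuous u) :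
    ∫ x in (0 : ℝ)..L, (u x + deriv v x) = ∫ x in (0 : ℝ)..L, u x := by
  have hv' := hv.deriv.continuous.intervalIntegrable (μ := volume) 0 L
  have hvL : v L = v 0 := by simpa using hv.periodic 0
  rw [intervalIntegral.integral_add (hu.intervalIntegrable _ _) hv',
    intervalIntegral.integral_deriv_eq_sub (fun x _ => hv.differentiable x) hv',
    hvL, sub_self, add_zero]

lemma integral_deriv_mul (hu : PeriodicContDiff L 1 u) (hv : PeriodicContDiff L 1 v) :
    ∫ x in (0 : ℝ)..L, deriv u x * v x = -∫ x in (0 : ℝ)..L, u x * deriv v x := by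
  have hcont : Continuous fun x => u x * deriv v x := hu.continuous.mul hv.deriv.continuous
  rw [← intervalIntegral.integral_neg, ← (hu.mul hv).integral_add_deriv hcont.fun_neg]
  refine intervalIntegral.integral_congr fun x _ => ?_
  simp only [((hu.hasDerivAt x).fun_mul (hv.hasDerivAt x)).deriv]
  ring

end PeriodicContDiff

/-- The first-order operator `u ↦ ∂_x (p u)`. Its square is the operator `∂_x (p ∂_x (p u))` that
makes up `A^ε`. -/
def transport (p u : ℝ → ℝ) : ℝ → ℝ := deriv fun x => p x * u x

section Transport

variable {L : ℝ} {n : ℕ} {p u v : ℝ → ℝ}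

lemma transport_apply {x : ℝ} (hp : DifferentiableAt ℝ p x) (hu : DifferentiableAt ℝ u x) :
    transport p u x = deriv p x * u x + p x * deriv u x :=
  deriv_fun_mul hp hu

protected lemma PeriodicContDiff.transport (hp : PeriodicContDiff L (n + 1) p)
    (hu : PeriodicContDiff L (n + 1) u) : PeriodicContDiff L n (transport p u) :=
  (hp.mul hu).deriv

lemma PeriodicContDiff.transport_transport (hp : PeriodicContDiff L (n + 2) p)
    (hu : PeriodicContDiff L (n + 2) u) : PeriodicContDiff L n (transport p (transport p u)) :=
  (hp.of_le (Nat.le_succ _)).transport (hp.transport hu)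

lemma deriv_transport (hp : PeriodicContDiff L 2 p) (hu : PeriodicContDiff L 2 u) :
    deriv (transport p u) = fun x => transport p (deriv u) x + transport (deriv p) u x := by
  have hpu : transport p u = fun x => deriv p x * u x + p x * deriv u x :=
    funext fun x => transport_apply (hp.differentiable x) (hu.differentiable x)
  funext x
  have h₁ := (hp.deriv.hasDerivAt x).fun_mul (hu.hasDerivAt x)
  have h₂ := (hp.hasDerivAt x).fun_mul (hu.deriv.hasDerivAt x)
  rw [hpu, (h₁.fun_add h₂).deriv, transport_apply (hp.differentiable x) (hu.deriv.differentiable x),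
    transport_apply (hp.deriv.differentiable x) (hu.differentiable x)]
  ring

lemma deriv_transport_apply (hp : PeriodicContDiff L 2 p) (hu : PeriodicContDiff L 2 u) (x : ℝ) :
    deriv (transport p u) x
      = deriv (deriv p) x * u x + 2 * deriv p x * deriv u x + p x * deriv (deriv u) x := by
  simp only [deriv_transport hp hu,
    transport_apply (hp.differentiable x) (hu.deriv.differentiable x),
    transport_apply (hp.deriv.differentiable x) (hu.differentiable x)]
  ring

lemma transport_transport_apply (hp : PeriodicContDiff L 2 p) (hu : PeriodicContDiff L 2 u)
    (x : ℝ) :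
    transport p (transport p u) x
      = (deriv p x * deriv p x + p x * deriv (deriv p) x) * u x
        + 3 * (p x * deriv p x) * deriv u x + p x * p x * deriv (deriv u) x := by
  rw [transport_apply (hp.differentiable x) ((hp.transport hu).differentiable x),
    deriv_transport_apply hp hu, transport_apply (hp.differentiable x) (hu.differentiable x)]
  ring

lemma deriv_transport_transport_apply (hp : PeriodicContDiff L 3 p)
    (hu : PeriodicContDiff L 3 u) (x : ℝ) :
    deriv (transport p (transport p u)) x
      = (3 * (deriv p x * deriv (deriv p) x) + p x * deriv (deriv (deriv p)) x) * u x
        + 4 * (deriv p x * deriv p x + p x * deriv (deriv p) x) * deriv u x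
        + 5 * (p x * deriv p x) * deriv (deriv u) x
        + p x * p x * deriv (deriv (deriv u)) x := by
  have h₀ := hp.hasDerivAt x
  have h₁ := hp.deriv.hasDerivAt x
  have h₂ := hp.deriv.deriv.hasDerivAt x
  rw [funext (transport_transport_apply (hp.of_le (by norm_num)) (hu.of_le (by norm_num)))]
  refine (((((h₁.fun_mul h₁).fun_add (h₀.fun_mul h₂)).fun_mul (hu.hasDerivAt x)).fun_add
    (((h₀.fun_mul h₁).const_mul 3).fun_mul (hu.deriv.hasDerivAt x))).fun_add
    ((h₀.fun_mul h₀).fun_mul (hu.deriv.deriv.hasDerivAt x))).deriv.trans ?_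
  ring

/-- In operator form: the adjoint of `transport p` is `-transport p` plus multiplication by
`deriv p`. -/
lemma integral_transport_mul_add (hp : PeriodicContDiff L 1 p) (hu : PeriodicContDiff L 1 u)
    (hv : PeriodicContDiff L 1 v) :
    ∫ x in (0 : ℝ)..L, (transport p v x * u x + v x * transport p u x)
      = ∫ x in (0 : ℝ)..L, deriv p x * v x * u x := by
  have hcont : Continuous fun x => deriv p x * v x * u x :=
    (hp.deriv.continuous.mul hv.continuous).mul hu.continuous
  rw [← ((hp.mul hv).mul hu).integral_add_deriv hcont]
  refine intervalIntegral.integral_congr fun x _ => ?_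
  have hpv := (hp.hasDerivAt x).fun_mul (hv.hasDerivAt x)
  simp only [(hpv.fun_mul (hu.hasDerivAt x)).deriv,
    transport_apply (hp.differentiable x) (hu.differentiable x),
    transport_apply (hp.differentiable x) (hv.differentiable x)]
  ring

/-- The first bracket has the form of `integral_transport_mul_add`; it arises from
`∂ ∘ transport p = transport p ∘ ∂ + transport p'` (`deriv_transport`). -/
lemma deriv_transport_transport_mul_deriv_add (hp : PeriodicContDiff L 3 p)
    (hu : PeriodicContDiff L 3 u) (x : ℝ) :
    deriv (transport p (transport p u)) x * deriv u x
        + deriv (transport p u) x * deriv (transport p u) x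
      = (transport p (deriv (transport p u)) x * deriv u x
          + deriv (transport p u) x * transport p (deriv u) x)
        + (2 * (deriv p x * deriv u x * deriv (transport p u) x)
          - deriv (deriv (deriv p)) x * u x * transport p u x)
        + deriv (fun y => deriv (deriv p) y * transport p u y * u y) x := by
  have hp₂ : PeriodicContDiff L 2 p := hp.of_le (by norm_num)
  have hu₂ : PeriodicContDiff L 2 u := hu.of_le (by norm_num)
  have hw : PeriodicContDiff L 2 (transport p u) := hp.transport hu
  set w := transport p u
  have hdH := ((hp.deriv.deriv.hasDerivAt x).fun_mul (hw.hasDerivAt x)).fun_mul (hu.hasDerivAt x)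
  have hdw : deriv w x = transport p (deriv u) x + transport (deriv p) u x :=
    congrFun (deriv_transport hp₂ hu₂) x
  have hTu : transport (deriv p) u x = deriv (deriv p) x * u x + deriv p x * deriv u x :=
    transport_apply (hp₂.deriv.differentiable x) (hu.differentiable x)
  have hTw : transport (deriv p) w x = deriv (deriv p) x * w x + deriv p x * deriv w x :=
    transport_apply (hp₂.deriv.differentiable x) (hw.differentiable x)
  rw [hdH.deriv, deriv_transport hp₂ hw]
  linear_combination deriv w x * (hdw + hTu) + deriv u x * hTw

lemma integral_deriv_transport_transport_mul_deriv_add (hp : PeriodicContDiff L 3 p)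
    (hu : PeriodicContDiff L 3 u) :
    ∫ x in (0 : ℝ)..L, (deriv (transport p (transport p u)) x * deriv u x
        + deriv (transport p u) x * deriv (transport p u) x)
      = ∫ x in (0 : ℝ)..L, (3 * (deriv p x * deriv u x * deriv (transport p u) x)
        - deriv (deriv (deriv p)) x * u x * transport p u x) := by
  have hp₁ : PeriodicContDiff L 1 p := hp.of_le (by norm_num)
  have hu₁ : PeriodicContDiff L 1 u := hu.of_le (by norm_num)
  have hu' : PeriodicContDiff L 1 (deriv u) := hu.deriv.of_le (by norm_num)
  have hw : PeriodicContDiff L 2 (transport p u) := hp.transport hu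
  have hw' : PeriodicContDiff L 1 (deriv (transport p u)) := hw.deriv
  simp only [deriv_transport_transport_mul_deriv_add hp hu]
  set w := transport p u
  have hH : PeriodicContDiff L 1 fun x => deriv (deriv p) x * w x * u x :=
    (hp.deriv.deriv.mul (hw.of_le (by norm_num))).mul hu₁
  have := (hp₁.transport hw').continuous
  have := (hp₁.transport hu').continuous
  have := hp₁.deriv.continuous
  have := hp.deriv.deriv.deriv.continuous
  have := hu.continuous
  have := hu'.continuous
  have := hw.continuous
  have := hw'.continuous
  rw [hH.integral_add_deriv (by fun_prop), intervalIntegral.integral_add,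
    integral_transport_mul_add hp₁ hu' hw', ← intervalIntegral.integral_add]
  · exact intervalIntegral.integral_congr fun x _ => by ring
  all_goals exact Continuous.intervalIntegrable (by fun_prop) _ _

lemma integral_deriv_mul_deriv_mul_deriv_transport (hp : PeriodicContDiff L 2 p)
    (hu : PeriodicContDiff L 2 u) :
    ∫ x in (0 : ℝ)..L, deriv p x * deriv u x * deriv (transport p u) x
      = ∫ x in (0 : ℝ)..L, (deriv p x * deriv (deriv p) x * u x * deriv u x
        + 3 / 2 * (deriv p x * deriv p x * deriv u x ^ 2)
        - 1 / 2 * (p x * deriv (deriv p) x * deriv u x ^ 2)) := by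
  have cp := hp.continuous
  have cp' := hp.deriv.continuous
  have cp'' := hp.deriv.deriv.continuous
  have cu := hu.continuous
  have cu' := hu.deriv.continuous
  have hpp' : PeriodicContDiff L 1 fun x => p x * deriv p x := (hp.of_le (by norm_num)).mul hp.deriv
  have hH := (hpp'.mul (hu.deriv.mul hu.deriv)).const_mul (1 / 2)
  refine Eq.trans ?_ (hH.integral_add_deriv (by fun_prop))
  refine intervalIntegral.integral_congr fun x _ => ?_
  have hdpp' := (hp.hasDerivAt x).fun_mul (hp.deriv.hasDerivAt x)
  have hdu' := hu.deriv.hasDerivAt x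
  simp only [((hdpp'.fun_mul (hdu'.fun_mul hdu')).const_mul (1 / 2)).deriv,
    deriv_transport_apply hp hu]
  ring

/-- Up to exact derivatives all terms with `u''` or `u'''` cancel: since `transport p u` is
`p' u + p u'`, the right-hand side is a quadratic form in `(u, u')`. -/
theorem integral_transport_add_norm12sq (hp : PeriodicContDiff L 3 p)
    (hu : PeriodicContDiff L 3 u) :
    (∫ x in (0 : ℝ)..L, transport p (transport p u) x * u x)
        + (∫ x in (0 : ℝ)..L, deriv (transport p (transport p u)) x * deriv u x)
        + norm12sq L (transport p u)
      = ∫ x in (0 : ℝ)..L, (deriv p x * transport p u x * u x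
        + 3 * (deriv p x * deriv (deriv p) x * u x * deriv u x
          + 3 / 2 * (deriv p x * deriv p x * deriv u x ^ 2)
          - 1 / 2 * (p x * deriv (deriv p) x * deriv u x ^ 2))
        - deriv (deriv (deriv p)) x * u x * transport p u x) := by
  have hp₁ : PeriodicContDiff L 1 p := hp.of_le (by norm_num)
  have hu₁ : PeriodicContDiff L 1 u := hu.of_le (by norm_num)
  have hw : PeriodicContDiff L 2 (transport p u) := hp.transport hu
  have hTw := hp.transport_transport hu
  have := hp.continuous
  have := hp₁.deriv.continuous
  have := hp.deriv.deriv.continuous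
  have := hp.deriv.deriv.deriv.continuous
  have := hu.continuous
  have := hu₁.deriv.continuous
  have := hw.continuous
  have := hw.deriv.continuous
  have := hTw.continuous
  have := hTw.deriv.continuous
  unfold norm12sq
  set w := transport p u
  calc _ = (∫ x in (0 : ℝ)..L, (transport p w x * u x + w x * w x))
        + ∫ x in (0 : ℝ)..L, (deriv (transport p w) x * deriv u x + deriv w x * deriv w x) := by
        simp only [sq]
        rw [intervalIntegral.integral_add, intervalIntegral.integral_add,
          intervalIntegral.integral_add]
        · ring
        all_goals exact Continuous.intervalIntegrable (by fun_prop) _ _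
    _ = (∫ x in (0 : ℝ)..L, deriv p x * w x * u x)
        + ∫ x in (0 : ℝ)..L, (3 * (deriv p x * deriv u x * deriv w x)
          - deriv (deriv (deriv p)) x * u x * w x) := by
        rw [integral_transport_mul_add hp₁ hu₁ (hw.of_le (by norm_num)),
          integral_deriv_transport_transport_mul_deriv_add hp hu]
    _ = _ := by
        rw [intervalIntegral.integral_sub, intervalIntegral.integral_const_mul,
          integral_deriv_mul_deriv_mul_deriv_transport (hp.of_le (by norm_num : 2 ≤ 3))
            (hu.of_le (by norm_num)),
          ← intervalIntegral.integral_const_mul, add_sub, ← intervalIntegral.integral_add,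
          ← intervalIntegral.integral_sub]
        all_goals exact Continuous.intervalIntegrable (by fun_prop) _ _

end Transport

/-- A coefficient function for the noise on the torus of length `L`, with `M` a common bound for the
products `p⁽ⁱ⁾ p⁽ʲ⁾`, `i + j ≤ 4`. The orders are capped at three, so that class `C³` suffices; the
derivative of order `i` is encoded as the iterate `deriv^[i]`. -/
structure IsNoiseMode (L M : ℝ) (p : ℝ → ℝ) : Prop where
  periodicContDiff : PeriodicContDiff L 3 p
  abs_mul_le : ∀ i j : ℕ, i ≤ 3 ∧ j ≤ 3 ∧ i + j ≤ 4 → ∀ x, |deriv^[i] p x * deriv^[j] p x| ≤ M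

lemma abs_mul_le_of_abs_le {a b A B : ℝ} (ha : |a| ≤ A) (hb : |b| ≤ B) : |a * b| ≤ A * B := by
  rw [abs_mul]
  exact mul_le_mul ha hb (abs_nonneg b) ((abs_nonneg a).trans ha)

lemma mul_mul_le_of_abs_le {a M : ℝ} (ha : |a| ≤ M) (s t : ℝ) :
    a * s * t ≤ M * ((s ^ 2 + t ^ 2) / 2) := by
  have hst : |s * t| ≤ (s ^ 2 + t ^ 2) / 2 := by
    rw [abs_le]
    constructor <;> nlinarith [sq_nonneg (s + t), sq_nonneg (s - t)]
  rw [mul_assoc]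
  exact (le_abs_self _).trans (abs_mul_le_of_abs_le ha hst)

lemma abs_le_mul_abs_of_abs_deriv_le {f : ℝ → ℝ} {K : ℝ} (hf : Differentiable ℝ f)
    (hf0 : f 0 = 0) (hfb : ∀ s, |deriv f s| ≤ K) (s : ℝ) : |f s| ≤ K * |s| := by
  simpa only [hf0, sub_zero, Real.norm_eq_abs] using
    convex_univ.norm_image_sub_le_of_norm_deriv_le (fun y _ => hf y) (fun y _ => hfb y)
      (Set.mem_univ 0) (Set.mem_univ s)

namespace IsNoiseMode

variable {L M B : ℝ} {p u : ℝ → ℝ}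

lemma nonneg (hp : IsNoiseMode L M p) : 0 ≤ M :=
  (abs_nonneg _).trans (hp.abs_mul_le 0 0 (by decide) 0)

lemma abs_transport_transport_le (hp : IsNoiseMode L M p) (hu : PeriodicContDiff L 2 u)
    (hB : ∀ i ≤ 2, ∀ x, |deriv^[i] u x| ≤ B) (x : ℝ) :
    |transport p (transport p u) x| ≤ 6 * (M * B) := by
  have h₁₁ := abs_le.1 <|
    abs_mul_le_of_abs_le (hp.abs_mul_le 1 1 (by decide) x) (hB 0 (by decide) x)
  have h₀₂ := abs_le.1 <|
    abs_mul_le_of_abs_le (hp.abs_mul_le 0 2 (by decide) x) (hB 0 (by decide) x)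
  have h₀₁ := abs_le.1 <|
    abs_mul_le_of_abs_le (hp.abs_mul_le 0 1 (by decide) x) (hB 1 (by decide) x)
  have h₀₀ := abs_le.1 <|
    abs_mul_le_of_abs_le (hp.abs_mul_le 0 0 (by decide) x) (hB 2 (by decide) x)
  simp only [Function.iterate_succ_apply', Function.iterate_zero_apply] at h₁₁ h₀₂ h₀₁ h₀₀
  rw [transport_transport_apply (hp.periodicContDiff.of_le (by norm_num)) hu, abs_le]
  constructor <;> linarith

lemma abs_deriv_transport_transport_le (hp : IsNoiseMode L M p) (hu : PeriodicContDiff L 3 u)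
    (hB : ∀ i ≤ 3, ∀ x, |deriv^[i] u x| ≤ B) (x : ℝ) :
    |deriv (transport p (transport p u)) x| ≤ 18 * (M * B) := by
  have h₁₂ := abs_le.1 <|
    abs_mul_le_of_abs_le (hp.abs_mul_le 1 2 (by decide) x) (hB 0 (by decide) x)
  have h₀₃ := abs_le.1 <|
    abs_mul_le_of_abs_le (hp.abs_mul_le 0 3 (by decide) x) (hB 0 (by decide) x)
  have h₁₁ := abs_le.1 <|
    abs_mul_le_of_abs_le (hp.abs_mul_le 1 1 (by decide) x) (hB 1 (by decide) x)
  have h₀₂ := abs_le.1 <|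
    abs_mul_le_of_abs_le (hp.abs_mul_le 0 2 (by decide) x) (hB 1 (by decide) x)
  have h₀₁ := abs_le.1 <|
    abs_mul_le_of_abs_le (hp.abs_mul_le 0 1 (by decide) x) (hB 2 (by decide) x)
  have h₀₀ := abs_le.1 <|
    abs_mul_le_of_abs_le (hp.abs_mul_le 0 0 (by decide) x) (hB 3 (by decide) x)
  simp only [Function.iterate_succ_apply', Function.iterate_zero_apply]
    at h₁₂ h₀₃ h₁₁ h₀₂ h₀₁ h₀₀
  rw [deriv_transport_transport_apply hp.periodicContDiff hu, abs_le]
  constructor <;> linarith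

theorem integral_transport_add_norm12sq_le (hp : IsNoiseMode L M p) (hL : 0 ≤ L)
    (hu : PeriodicContDiff L 3 u) :
    (∫ x in (0 : ℝ)..L, transport p (transport p u) x * u x)
        + (∫ x in (0 : ℝ)..L, deriv (transport p (transport p u)) x * deriv u x)
        + norm12sq L (transport p u)
      ≤ 9 * M * norm12sq L u := by
  have hp₃ := hp.periodicContDiff
  have := hp₃.continuous
  have := hp₃.deriv.continuous
  have := hp₃.deriv.deriv.continuous
  have := hp₃.deriv.deriv.deriv.continuous
  have := hu.continuous
  have := hu.deriv.continuous
  have := (hp₃.transport hu).continuous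
  rw [integral_transport_add_norm12sq hp₃ hu, norm12sq, ← intervalIntegral.integral_const_mul]
  refine intervalIntegral.integral_mono_on hL
    (Continuous.intervalIntegrable (by fun_prop) _ _)
    (Continuous.intervalIntegrable (by fun_prop) _ _) fun x _ => ?_
  have h₁₁ := mul_mul_le_of_abs_le (hp.abs_mul_le 1 1 (by decide) x)
  have h₀₁ := mul_mul_le_of_abs_le (hp.abs_mul_le 0 1 (by decide) x) (u x) (deriv u x)
  have h₁₂ := mul_mul_le_of_abs_le (hp.abs_mul_le 1 2 (by decide) x) (u x) (deriv u x)
  have h₀₂ := mul_mul_le_of_abs_le ((abs_neg _).trans_le (hp.abs_mul_le 0 2 (by decide) x))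
    (deriv u x) (deriv u x)
  have h₁₃ := mul_mul_le_of_abs_le ((abs_neg _).trans_le (hp.abs_mul_le 1 3 (by decide) x))
    (u x) (u x)
  have h₀₃ := mul_mul_le_of_abs_le ((abs_neg _).trans_le (hp.abs_mul_le 0 3 (by decide) x))
    (u x) (deriv u x)
  simp only [Function.iterate_succ_apply', Function.iterate_zero_apply]
    at h₁₁ h₀₁ h₁₂ h₀₂ h₁₃ h₀₃
  rw [transport_apply (hp₃.differentiable x) (hu.differentiable x)]
  have hMu := mul_nonneg hp.nonneg (sq_nonneg (u x))
  have hMu' := mul_nonneg hp.nonneg (sq_nonneg (deriv u x))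
  linarith [h₁₁ (u x) (u x), h₁₁ (deriv u x) (deriv u x)]

lemma sq_mul_comp_add_sq_deriv_le (hp : IsNoiseMode L M p) (hu : Differentiable ℝ u)
    {f : ℝ → ℝ} {K : ℝ} (hf : Differentiable ℝ f) (hf0 : f 0 = 0) (hfb : ∀ s, |deriv f s| ≤ K)
    (x : ℝ) :
    (p x * f (u x)) ^ 2 + deriv (fun y => p y * f (u y)) x ^ 2
      ≤ 3 * M * K ^ 2 * (u x ^ 2 + deriv u x ^ 2) := by
  have hM := hp.nonneg
  have hpfu : deriv (fun y => p y * f (u y)) x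
      = deriv p x * f (u x) + p x * (deriv f (u x) * deriv u x) :=
    ((hp.periodicContDiff.hasDerivAt x).fun_mul
      ((hf (u x)).hasDerivAt.comp x (hu x).hasDerivAt)).deriv
  have hfu : f (u x) ^ 2 ≤ K ^ 2 * u x ^ 2 := by
    rw [← mul_pow, ← sq_abs, ← sq_abs (K * u x), abs_mul]
    gcongr
    exact (abs_le_mul_abs_of_abs_deriv_le hf hf0 hfb (u x)).trans (by gcongr; exact le_abs_self K)
  have hf'u : deriv f (u x) ^ 2 ≤ K ^ 2 := sq_le_sq.2 ((hfb _).trans (le_abs_self K))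
  have hp₀ : p x ^ 2 ≤ M := by
    rw [sq]
    exact (le_abs_self _).trans (hp.abs_mul_le 0 0 (by decide) x)
  have hp₁ : deriv p x ^ 2 ≤ M := by
    rw [sq]
    exact (le_abs_self _).trans (hp.abs_mul_le 1 1 (by decide) x)
  have h₀ : p x ^ 2 * f (u x) ^ 2 ≤ M * (K ^ 2 * u x ^ 2) := by gcongr
  have h₁ : deriv p x ^ 2 * f (u x) ^ 2 ≤ M * (K ^ 2 * u x ^ 2) := by gcongr
  have h₂ : p x ^ 2 * (deriv f (u x) ^ 2 * deriv u x ^ 2) ≤ M * (K ^ 2 * deriv u x ^ 2) := by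
    gcongr
  have h₃ : 0 ≤ M * (K ^ 2 * deriv u x ^ 2) := by positivity
  rw [hpfu]
  linarith [sq_nonneg (deriv p x * f (u x) - p x * (deriv f (u x) * deriv u x))]

theorem norm12sq_mul_comp_le (hp : IsNoiseMode L M p) (hL : 0 ≤ L) (hu : PeriodicContDiff L 1 u)
    {f : ℝ → ℝ} {K : ℝ} (hf : Differentiable ℝ f) (hf0 : f 0 = 0) (hfb : ∀ s, |deriv f s| ≤ K) :
    norm12sq L (fun x => p x * f (u x)) ≤ 3 * M * K ^ 2 * norm12sq L u := by
  have hcont : Continuous fun x => u x ^ 2 + deriv u x ^ 2 :=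
    (hu.continuous.pow 2).add (hu.deriv.continuous.pow 2)
  rw [norm12sq, norm12sq, ← intervalIntegral.integral_const_mul,
    intervalIntegral.integral_of_le hL, intervalIntegral.integral_of_le hL]
  exact integral_mono_of_nonneg (.of_forall fun x => by positivity)
    (hcont.const_mul _).integrableOn_Ioc
    (.of_forall (hp.sq_mul_comp_add_sq_deriv_le hu.differentiable hf hf0 hfb))

end IsNoiseMode

section TrigonometricModes

lemma iterate_deriv_mul_cos (a κ φ : ℝ) (n : ℕ) :
    deriv^[n] (fun x => a * Real.cos (κ * x + φ))
      = fun x => a * κ ^ n * Real.cos (κ * x + (φ + n * (Real.pi / 2))) := by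
  induction n with
  | zero => simp
  | succ n ih =>
    rw [Function.iterate_succ_apply', ih]
    funext x
    have hphase := ((hasDerivAt_id x).const_mul κ).add_const (φ + n * (Real.pi / 2))
    refine (hphase.cos.const_mul (a * κ ^ n)).deriv.trans ?_
    push_cast
    rw [show κ * x + (φ + (n + 1) * (Real.pi / 2))
        = κ * x + (φ + n * (Real.pi / 2)) + Real.pi / 2 by ring, Real.cos_add_pi_div_two]
    simp only [id]
    ring

lemma abs_pow_le_one_add_sq_add_pow_four (κ : ℝ) {m : ℕ} (hm : m ≤ 4) :
    |κ| ^ m ≤ 1 + κ ^ 2 + κ ^ 4 := by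
  have h₂ : κ ^ 2 = |κ| ^ 2 := (sq_abs κ).symm
  have h₄ : κ ^ 4 = |κ| ^ 4 := ((by decide : Even 4).pow_abs κ).symm
  rw [h₂, h₄]
  rcases le_total |κ| 1 with h | h
  · refine (pow_le_one₀ (abs_nonneg κ) h).trans ?_
    rw [add_assoc]
    exact le_add_of_nonneg_right (by positivity)
  · exact (pow_le_pow_right₀ h hm).trans (le_add_of_nonneg_left (by positivity))

theorem isNoiseMode_mul_cos {L M a κ φ : ℝ} {n : ℤ} (hκ : κ * L = n * (2 * Real.pi))
    (ha : a ^ 2 * (1 + κ ^ 2 + κ ^ 4) ≤ M) :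
    IsNoiseMode L M fun x => a * Real.cos (κ * x + φ) where
  periodicContDiff :=
    { contDiff := by fun_prop
      periodic := fun x => by
        simp only
        rw [mul_add, hκ, add_right_comm, Real.cos_add_int_mul_two_pi] }
  abs_mul_le := by
    rintro i j ⟨-, -, hij⟩ x
    have hterm (m : ℕ) : |deriv^[m] (fun x => a * Real.cos (κ * x + φ)) x| ≤ |a| * |κ| ^ m := by
      rw [iterate_deriv_mul_cos, abs_mul, abs_mul, abs_pow]
      exact mul_le_of_le_one_right (by positivity) (Real.abs_cos_le_one _)
    calc _ ≤ (|a| * |κ| ^ i) * (|a| * |κ| ^ j) := abs_mul_le_of_abs_le (hterm i) (hterm j)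
      _ = a ^ 2 * |κ| ^ (i + j) := by rw [mul_mul_mul_comm, ← pow_add, ← sq, sq_abs]
      _ ≤ a ^ 2 * (1 + κ ^ 2 + κ ^ 4) := by
        gcongr
        exact abs_pow_le_one_add_sq_add_pow_four κ hij
      _ ≤ M := ha

lemma cL_sq_mul {L : ℝ} (hL : 0 < L) (k : ℤ) :
    cL L k ^ 2 * (1 + (2 * Real.pi * k / L) ^ 2 + (2 * Real.pi * k / L) ^ 4) = 2 / L := by
  rw [cL, Real.sq_sqrt (by positivity)]
  have : 0 < 1 + (2 * Real.pi * k / L) ^ 2 + (2 * Real.pi * k / L) ^ 4 := by positivity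
  field_simp

theorem isNoiseMode_psi {L : ℝ} (hL : 0 < L) (k : ℤ) : IsNoiseMode L (2 / L) (psi L k) := by
  have hfreq : 2 * Real.pi * k / L * L = k * (2 * Real.pi) := by field_simp
  have harg (x : ℝ) : 2 * Real.pi * k * x / L = 2 * Real.pi * k / L * x := by ring
  rcases lt_trichotomy k 0 with hk | rfl | hk
  · convert isNoiseMode_mul_cos (φ := -(Real.pi / 2)) hfreq (cL_sq_mul hL k).le using 2 with x
    rw [psi, if_neg hk.not_gt, if_neg hk.ne, ← sub_eq_add_neg, Real.cos_sub_pi_div_two, harg]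
  · have hc₀ : (cL L 0 / Real.sqrt 2) ^ 2 * (1 + 0 ^ 2 + 0 ^ 4) ≤ 2 / L := by
      have h := cL_sq_mul hL 0
      norm_num [div_pow] at h ⊢
      rw [h]
      exact half_le_self (by positivity)
    convert isNoiseMode_mul_cos (n := 0) (φ := 0) (by simp) hc₀ using 2 with x
    simp [psi]
  · convert isNoiseMode_mul_cos (φ := 0) hfreq (cL_sq_mul hL k).le using 2 with x
    rw [psi, if_pos hk, add_zero, harg]

end TrigonometricModes

section Series

variable {ι : Type*} [Countable ι] {w : ι → ℝ} {G : ι → ℝ → ℝ} {b v : ℝ → ℝ} {B : ℝ}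

lemma hasSum_mul_integral_mul (a c : ℝ) (hw : Summable w) (hw0 : ∀ k, 0 ≤ w k)
    (hG : ∀ k, Continuous (G k)) (hGB : ∀ k x, |G k x| ≤ B) (hv : Continuous v) :
    HasSum (fun k => w k * ∫ x in a..c, G k x * v x)
      (∫ x in a..c, (∑' k, w k * G k x) * v x) := by
  have hbound (k : ι) (x : ℝ) : |w k * G k x| ≤ w k * B :=
    abs_mul_le_of_abs_le (abs_of_nonneg (hw0 k)).le (hGB k x)
  have hsum (x : ℝ) : Summable fun k => w k * G k x :=
    (hw.mul_right B).of_norm_bounded fun k => hbound k x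
  simp only [← intervalIntegral.integral_const_mul, ← mul_assoc]
  refine intervalIntegral.hasSum_integral_of_dominated_convergence (fun k x => w k * B * |v x|)
    (fun k => ((hG k).const_mul (w k) |>.mul hv).aestronglyMeasurable)
    (fun k => .of_forall fun x _ => abs_mul_le_of_abs_le (hbound k x) le_rfl)
    (.of_forall fun x _ => (hw.mul_right B).mul_right _) ?_
    (.of_forall fun x _ => (hsum x).hasSum.mul_right (v x))
  simp only [tsum_mul_right]
  exact (hv.abs.const_mul _).intervalIntegrable a c

lemma hasSum_mul_integral_mul_of_half_tsum_add (a c ε : ℝ) (hw : Summable w)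
    (hw0 : ∀ k, 0 ≤ w k) (hG : ∀ k, Continuous (G k)) (hGB : ∀ k x, |G k x| ≤ B)
    (hb : Continuous b) (hv : Continuous v) :
    HasSum (fun k => w k * ∫ x in a..c, G k x * v x)
      (2 * (∫ x in a..c, (1 / 2 * (∑' k, w k * G k x) + ε * b x) * v x)
        - 2 * ε * ∫ x in a..c, b x * v x) := by
  have hcont : Continuous fun x => ∑' k, w k * G k x :=
    continuous_tsum (fun k => (hG k).const_mul (w k)) (hw.mul_right B)
      fun k x => abs_mul_le_of_abs_le (abs_of_nonneg (hw0 k)).le (hGB k x)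
  convert hasSum_mul_integral_mul a c hw hw0 hG hGB hv using 1
  rw [← intervalIntegral.integral_const_mul, ← intervalIntegral.integral_const_mul,
    ← intervalIntegral.integral_sub]
  · exact intervalIntegral.integral_congr fun x _ => by ring
  all_goals exact Continuous.intervalIntegrable (by fun_prop) _ _

end Series

/-- The drift `A^ε` of the statement, for an arbitrary family of coefficient functions `Ψ k`. -/
def driftOp {ι : Type*} (Ψ : ι → ℝ → ℝ) (lam : ι → ℝ) (ε : ℝ) (u : ℝ → ℝ) : ℝ → ℝ := fun x =>
  1 / 2 * (∑' k, lam k ^ 2 * transport (Ψ k) (transport (Ψ k) u) x) + ε * deriv (deriv u) x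

section Drift

variable {ι : Type*} {L M : ℝ} {Ψ : ι → ℝ → ℝ} {lam : ι → ℝ} {u : ℝ → ℝ}

lemma deriv_driftOp (hL : L ≠ 0) (hΨ : ∀ k, IsNoiseMode L M (Ψ k))
    (hlam : Summable fun k => lam k ^ 2) (ε : ℝ) (hu : PeriodicContDiff L 3 u) :
    deriv (driftOp Ψ lam ε u) = fun x =>
      1 / 2 * (∑' k, lam k ^ 2 * deriv (transport (Ψ k) (transport (Ψ k) u)) x)
        + ε * deriv (deriv (deriv u)) x := by
  obtain ⟨B, hB⟩ := hu.exists_abs_iterate_deriv_le hL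
  have hTT (k : ι) := (hΨ k).periodicContDiff.transport_transport hu
  have hbound (k : ι) (x : ℝ) : |lam k ^ 2 * transport (Ψ k) (transport (Ψ k) u) x|
      ≤ lam k ^ 2 * (6 * (M * B)) :=
    abs_mul_le_of_abs_le (abs_of_nonneg (sq_nonneg _)).le <|
      (hΨ k).abs_transport_transport_le (hu.of_le (by norm_num))
        (fun i hi => hB i (hi.trans (by norm_num))) x
  have hbound' (k : ι) (x : ℝ) : |lam k ^ 2 * deriv (transport (Ψ k) (transport (Ψ k) u)) x|
      ≤ lam k ^ 2 * (18 * (M * B)) :=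
    abs_mul_le_of_abs_le (abs_of_nonneg (sq_nonneg _)).le <|
      (hΨ k).abs_deriv_transport_transport_le hu hB x
  funext x
  exact (((hasDerivAt_tsum (hlam.mul_right (18 * (M * B)))
    (fun k y => ((hTT k).hasDerivAt y).const_mul (lam k ^ 2)) hbound'
    ((hlam.mul_right (6 * (M * B))).of_norm_bounded fun k => hbound k 0) x).const_mul
      (1 / 2)).fun_add ((hu.deriv.deriv.hasDerivAt x).const_mul ε)).deriv

lemma integral_deriv_deriv_mul_add (hu : PeriodicContDiff L 3 u) :
    (∫ x in (0 : ℝ)..L, deriv (deriv u) x * u x)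
        + (∫ x in (0 : ℝ)..L, deriv (deriv (deriv u)) x * deriv u x)
      = norm2sq L u - norm22sq L u := by
  have hu' : PeriodicContDiff L 1 (deriv u) := hu.deriv.of_le (by norm_num)
  have := hu.continuous
  have := hu'.continuous
  have := hu'.deriv.continuous
  rw [hu'.integral_deriv_mul (hu.of_le (by norm_num)), hu.deriv.deriv.integral_deriv_mul hu',
    norm2sq, norm22sq, intervalIntegral.integral_add, intervalIntegral.integral_add]
  · simp only [← sq]
    ring
  all_goals exact Continuous.intervalIntegrable (by fun_prop) _ _

theorem hasSum_integral_transport_driftOp [Countable ι] (hL : L ≠ 0)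
    (hΨ : ∀ k, IsNoiseMode L M (Ψ k)) (hlam : Summable fun k => lam k ^ 2) (ε : ℝ)
    (hu : PeriodicContDiff L 3 u) :
    HasSum (fun k => lam k ^ 2 * ((∫ x in (0 : ℝ)..L, transport (Ψ k) (transport (Ψ k) u) x * u x)
        + ∫ x in (0 : ℝ)..L, deriv (transport (Ψ k) (transport (Ψ k) u)) x * deriv u x))
      (2 * (∫ x in (0 : ℝ)..L, driftOp Ψ lam ε u x * u x)
        + 2 * (∫ x in (0 : ℝ)..L, deriv (driftOp Ψ lam ε u) x * deriv u x)
        - 2 * ε * (norm2sq L u - norm22sq L u)) := by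
  obtain ⟨B, hB⟩ := hu.exists_abs_iterate_deriv_le hL
  have hTT (k : ι) := (hΨ k).periodicContDiff.transport_transport hu
  have h₀ := hasSum_mul_integral_mul_of_half_tsum_add 0 L ε hlam (fun _ => sq_nonneg _)
    (fun k => (hTT k).continuous)
    (fun k => (hΨ k).abs_transport_transport_le (hu.of_le (by norm_num))
      fun i hi => hB i (hi.trans (by norm_num)))
    hu.deriv.deriv.continuous hu.continuous
  have h₁ := hasSum_mul_integral_mul_of_half_tsum_add 0 L ε hlam (fun _ => sq_nonneg _)
    (fun k => (hTT k).deriv.continuous)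
    (fun k => (hΨ k).abs_deriv_transport_transport_le hu hB)
    hu.deriv.deriv.deriv.continuous hu.deriv.continuous
  simp only [mul_add]
  convert h₀.add h₁ using 1
  rw [deriv_driftOp hL hΨ hlam ε hu, ← integral_deriv_deriv_mul_add hu]
  simp only [driftOp]
  ring

end Drift

section Coercivity

variable {ι : Type*} {L M : ℝ} {Ψ : ι → ℝ → ℝ} {lam gam : ι → ℝ} {u : ℝ → ℝ}

lemma norm12sq_nonneg (hL : 0 ≤ L) (u : ℝ → ℝ) : 0 ≤ norm12sq L u :=
  intervalIntegral.integral_nonneg hL fun x _ => by positivity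

lemma norm2sq_le_norm12sq (hL : 0 ≤ L) (hu : PeriodicContDiff L 1 u) :
    norm2sq L u ≤ norm12sq L u := by
  have := hu.continuous
  have := hu.deriv.continuous
  exact intervalIntegral.integral_mono_on hL
    (Continuous.intervalIntegrable (by fun_prop) _ _)
    (Continuous.intervalIntegrable (by fun_prop) _ _)
    fun x _ => le_add_of_nonneg_right (sq_nonneg _)

theorem two_mul_integral_driftOp_add_tsum_le [Countable ι] (hL : 0 < L)
    (hΨ : ∀ k, IsNoiseMode L M (Ψ k)) (hlam : Summable fun k => lam k ^ 2) (ε : ℝ)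
    (hu : PeriodicContDiff L 3 u) :
    2 * (∫ x in (0 : ℝ)..L, driftOp Ψ lam ε u x * u x)
        + 2 * (∫ x in (0 : ℝ)..L, deriv (driftOp Ψ lam ε u) x * deriv u x)
        + ∑' k, lam k ^ 2 * norm12sq L (transport (Ψ k) u)
      ≤ (∑' k, lam k ^ 2) * (9 * M * norm12sq L u)
        + 2 * ε * (norm2sq L u - norm22sq L u) := by
  have hdrift := hasSum_integral_transport_driftOp hL.ne' hΨ hlam ε hu
  have hbound := hlam.mul_right (9 * M * norm12sq L u)
  have hle (k : ι) := mul_le_mul_of_nonneg_left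
    ((hΨ k).integral_transport_add_norm12sq_le hL.le hu) (sq_nonneg (lam k))
  simp only [mul_add _ (_ + _)] at hle
  have hnoise : Summable fun k => lam k ^ 2 * norm12sq L (transport (Ψ k) u) :=
    .of_nonneg_of_le (fun k => mul_nonneg (sq_nonneg _) (norm12sq_nonneg hL.le _))
      (fun k => le_sub_iff_add_le'.2 (hle k)) (hbound.sub hdrift.summable)
  have htsum := (hdrift.summable.add hnoise).tsum_le_tsum hle hbound
  rw [hdrift.summable.tsum_add hnoise, hdrift.tsum_eq, tsum_mul_right] at htsum
  linarith

theorem tsum_mul_norm12sq_mul_comp_le (hL : 0 ≤ L) (hΨ : ∀ k, IsNoiseMode L M (Ψ k))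
    (hgam : Summable fun k => gam k ^ 2) (hu : PeriodicContDiff L 1 u)
    {f : ℝ → ℝ} {K : ℝ} (hf : Differentiable ℝ f) (hf0 : f 0 = 0) (hfb : ∀ s, |deriv f s| ≤ K) :
    ∑' k, gam k ^ 2 * norm12sq L (fun x => Ψ k x * f (u x))
      ≤ (∑' k, gam k ^ 2) * (3 * M * K ^ 2 * norm12sq L u) := by
  have hbound := hgam.mul_right (3 * M * K ^ 2 * norm12sq L u)
  have hle (k : ι) := mul_le_mul_of_nonneg_left
    ((hΨ k).norm12sq_mul_comp_le hL hu hf hf0 hfb) (sq_nonneg (gam k))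
  rw [← tsum_mul_right]
  exact (Summable.of_nonneg_of_le (fun k => mul_nonneg (sq_nonneg _) (norm12sq_nonneg hL _)) hle
    hbound).tsum_le_tsum hle hbound

theorem coercivity_estimate_general [Countable ι] (hL : 0 < L)
    (hΨ : ∀ k, IsNoiseMode L M (Ψ k)) (hsum : Summable fun k => lam k ^ 2 + gam k ^ 2)
    {f : ℝ → ℝ} {K : ℝ} (hf : Differentiable ℝ f) (hf0 : f 0 = 0)
    (hfb : ∀ s, |deriv f s| ≤ K) :
    ∃ C : ℝ, 0 < C ∧ ∀ ε : ℝ, 0 ≤ ε → ε ≤ 1 → ∀ u : ℝ → ℝ, PeriodicContDiff L 3 u →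
      2 * (∫ x in (0 : ℝ)..L, driftOp Ψ lam ε u x * u x)
          + 2 * (∫ x in (0 : ℝ)..L, deriv (driftOp Ψ lam ε u) x * deriv u x)
          + (∑' k, lam k ^ 2 * norm12sq L (transport (Ψ k) u))
          + (∑' k, gam k ^ 2 * norm12sq L (fun x => Ψ k x * f (u x)))
        ≤ C * norm12sq L u - 2 * ε * norm22sq L u := by
  have hlam : Summable fun k => lam k ^ 2 :=
    hsum.of_nonneg_of_le (fun k => sq_nonneg _) fun k => le_add_of_nonneg_right (sq_nonneg _)
  have hgam : Summable fun k => gam k ^ 2 :=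
    hsum.of_nonneg_of_le (fun k => sq_nonneg _) fun k => le_add_of_nonneg_left (sq_nonneg _)
  refine ⟨|(∑' k, lam k ^ 2) * (9 * M) + (∑' k, gam k ^ 2) * (3 * M * K ^ 2)| + 2,
    by positivity, fun ε hε hε₁ u hu => ?_⟩
  have hu₁ : PeriodicContDiff L 1 u := hu.of_le (by norm_num)
  have hdrift := two_mul_integral_driftOp_add_tsum_le hL hΨ hlam ε hu
  have hnoise := tsum_mul_norm12sq_mul_comp_le hL.le hΨ hgam hu₁ hf hf0 hfb
  have hN := norm12sq_nonneg hL.le u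
  have hviscous : ε * norm2sq L u ≤ norm12sq L u :=
    (mul_le_mul_of_nonneg_left (norm2sq_le_norm12sq hL.le hu₁) hε).trans
      (mul_le_of_le_one_left hN hε₁)
  have hC := mul_le_mul_of_nonneg_right (le_abs_self
    ((∑' k, lam k ^ 2) * (9 * M) + (∑' k, gam k ^ 2) * (3 * M * K ^ 2))) hN
  linarith

end Coercivity

/-- Coercivity estimate (condition (H3)) for the drift `A^ε` together with the noise
coefficients, with a constant independent of `ε` and `u`. -/
theorem coercivity_estimate (L : ℝ) (hL : 0 < L)
    (lam gam : ℤ → ℝ) (hpos : ∀ k : ℤ, 0 ≤ lam k)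
    (hsum : Summable fun k : ℤ => (lam k) ^ 2 + (gam k) ^ 2)
    (f : ℝ → ℝ) (K : ℝ) (hf : ContDiff ℝ 1 f) (hf0 : f 0 = 0)
    (hfb : ∀ s : ℝ, |deriv f s| ≤ K)
    (hflip : ∀ s t : ℝ, |deriv f s - deriv f t| ≤ K * |s - t|) :
    ∃ C : ℝ, 0 < C ∧
      ∀ ε : ℝ, 0 < ε → ε ≤ 1 →
      ∀ u : ℝ → ℝ, ContDiff ℝ (⊤ : ℕ∞) u → (∀ x : ℝ, u (x + L) = u x) →
        2 * (∫ x in (0 : ℝ)..L, Aop L lam ε u x * u x)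
          + 2 * (∫ x in (0 : ℝ)..L, deriv (Aop L lam ε u) x * deriv u x)
          + (∑' k : ℤ, (lam k) ^ 2
              * ∫ x in (0 : ℝ)..L,
                  ((deriv (fun y => psi L k y * u y) x) ^ 2
                    + (deriv (deriv (fun y => psi L k y * u y)) x) ^ 2))
          + (∑' k : ℤ, (gam k) ^ 2
              * ∫ x in (0 : ℝ)..L,
                  ((psi L k x * f (u x)) ^ 2
                    + (deriv (fun y => psi L k y * f (u y)) x) ^ 2))
          ≤ C * norm12sq L u - 2 * ε * norm22sq L u := by
  obtain ⟨C, hC, hle⟩ := coercivity_estimate_general hL (isNoiseMode_psi hL) hsum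
    (hf.differentiable one_ne_zero) hf0 hfb
  exact ⟨C, hC, fun ε hε hε₁ u hu hper => hle ε hε.le hε₁ u ⟨contDiff_infty.1 hu 3, hper⟩⟩

end
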